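/- Let α ∈ [0,1) be irrational and 0 < s < 2. If the set X(√t, α) = { √n · e^{2πi n α} : n ∈ ℕ } ⊂ ℂ is not (s/2)-uniformly discrete, then there exists k ∈ ℕ with k ≥ 1 such that k·‖kα‖ < s², where ‖x‖ denotes the distance from x to the nearest integer. -/

import Mathlib

/-- The Fermat-spiral point set `X(√t, α) = { √n·e^{2πi n α} : n ∈ ℕ } ⊆ ℂ`. -/
noncomputable def fermatSpiral (α : ℝ) : Set ℂ :=
  {z : ℂ | ∃ n : ℕ, z = Real.sqrt n * Complex.exp (2 * Real.pi * Complex.I * (n * α))}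

/-- `‖x‖`, the distance from the real number `x` to the nearest integer. -/
noncomputable def nearestIntDist (x : ℝ) : ℝ := |x - round x|

/-!
Write two points of the spiral as `z = √m · u` and `w = √n · v` with `u`, `v` on the unit circle.
The decomposition `z - w = (√m + √n)/2 · (u - v) + (√m - √n)/2 · (u + v)` is orthogonal, so
`(√m + √n) · ‖u - v‖ ≤ 2 · ‖z - w‖`, while the chord has length
`‖u - v‖ = 2 · |sin (π(m - n)α)| ≥ 4 · ‖(m - n)α‖` by Jordan's inequality. Multiplying by
`|√m - √n| ≤ ‖z - w‖` gives `|m - n| · ‖(m - n)α‖ ≤ ‖z - w‖² / 2`.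
-/

lemma abs_add_mul_norm_sub_le_two_mul_norm_smul_sub_smul {E : Type*} [NormedAddCommGroup E]
    [InnerProductSpace ℝ E] {u v : E} (huv : ‖u‖ = ‖v‖) (p q : ℝ) :
    |p + q| * ‖u - v‖ ≤ 2 * ‖p • u - q • v‖ := by
  have decomposition : (2 : ℝ) • (p • u - q • v) = (p + q) • (u - v) + (p - q) • (u + v) := by
    module
  have orthogonal : inner ℝ ((p + q) • (u - v)) ((p - q) • (u + v)) = 0 := by
    rw [real_inner_smul_left, real_inner_smul_right, real_inner_comm,
      (real_inner_add_sub_eq_zero_iff u v).2 huv, mul_zero, mul_zero]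
  have pythagoras := norm_add_sq_eq_norm_sq_add_norm_sq_real orthogonal
  calc |p + q| * ‖u - v‖ = ‖(p + q) • (u - v)‖ := by rw [norm_smul, Real.norm_eq_abs]
    _ ≤ ‖(p + q) • (u - v) + (p - q) • (u + v)‖ :=
        (mul_self_le_mul_self_iff (norm_nonneg _) (norm_nonneg _)).2 <|
          pythagoras.symm ▸ le_add_of_nonneg_right (mul_self_nonneg _)
    _ = 2 * ‖p • u - q • v‖ := by rw [← decomposition, norm_smul, Real.norm_two]

section

open Complex (exp I)
open Real (sin sqrt)
open scoped Real

lemma nearestIntDist_nonneg (x : ℝ) : 0 ≤ nearestIntDist x := abs_nonneg _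

lemma two_mul_nearestIntDist_le_abs_sin_pi_mul (x : ℝ) :
    2 * nearestIntDist x ≤ |sin (π * x)| := by
  have abs_arg : |π * (x - round x)| = π * nearestIntDist x := by
    rw [abs_mul, abs_of_pos Real.pi_pos, nearestIntDist]
  have arg_le : |π * (x - round x)| ≤ π / 2 := by
    rw [abs_arg, nearestIntDist]
    nlinarith [Real.pi_pos, abs_sub_round x]
  calc 2 * nearestIntDist x = 2 / π * |π * (x - round x)| := by
        rw [abs_arg]; field_simp
    _ ≤ |sin (π * (x - round x))| := Real.mul_abs_le_abs_sin arg_le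
    _ = |sin (π * x)| := by
        rw [mul_sub, mul_comm π (round x : ℝ), Real.sin_sub_int_mul_pi, abs_mul,
          abs_neg_one_zpow, one_mul]

lemma norm_exp_two_pi_mul_I (a : ℝ) : ‖exp (2 * π * I * a)‖ = 1 := by
  simpa [mul_right_comm] using Complex.norm_exp_ofReal_mul_I (2 * π * a)

lemma norm_exp_two_pi_mul_I_sub_exp (a b : ℝ) :
    ‖exp (2 * π * I * a) - exp (2 * π * I * b)‖ = 2 * |sin (π * (a - b))| := by
  have factor : exp (2 * π * I * a) - exp (2 * π * I * b) =
      exp (2 * π * I * b) * (exp (I * (2 * (π * (a - b)) : ℝ)) - 1) := by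
    rw [mul_sub_one, ← Complex.exp_add]
    congr 2
    push_cast
    ring
  rw [factor, norm_mul, norm_exp_two_pi_mul_I, one_mul, Complex.norm_exp_I_mul_ofReal_sub_one,
    mul_div_cancel_left₀ _ two_ne_zero, norm_mul, Real.norm_two, Real.norm_eq_abs]

lemma four_mul_nearestIntDist_sub_le_norm_exp_sub (a b : ℝ) :
    4 * nearestIntDist (a - b) ≤ ‖exp (2 * π * I * a) - exp (2 * π * I * b)‖ := by
  rw [norm_exp_two_pi_mul_I_sub_exp]
  linarith [two_mul_nearestIntDist_le_abs_sin_pi_mul (a - b)]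

lemma abs_sq_sub_sq_mul_nearestIntDist_sub_le {p q : ℝ} (hp : 0 ≤ p) (hq : 0 ≤ q) (a b : ℝ) :
    |p ^ 2 - q ^ 2| * nearestIntDist (a - b) ≤
      ‖p * exp (2 * π * I * a) - q * exp (2 * π * I * b)‖ ^ 2 / 2 := by
  set u := exp (2 * π * I * a)
  set v := exp (2 * π * I * b)
  have norm_u : ‖u‖ = 1 := norm_exp_two_pi_mul_I a
  have norm_v : ‖v‖ = 1 := norm_exp_two_pi_mul_I b
  have radial : |p - q| ≤ ‖p * u - q * v‖ := by
    simpa [norm_u, norm_v, abs_of_nonneg hp, abs_of_nonneg hq] using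
      abs_norm_sub_norm_le (p * u : ℂ) (q * v)
  have angular : (p + q) * (4 * nearestIntDist (a - b)) ≤ 2 * ‖p * u - q * v‖ :=
    calc (p + q) * (4 * nearestIntDist (a - b)) ≤ |p + q| * ‖u - v‖ := by
          rw [abs_of_nonneg (add_nonneg hp hq)]
          gcongr
          exact four_mul_nearestIntDist_sub_le_norm_exp_sub a b
      _ ≤ 2 * ‖p * u - q * v‖ := by
          simpa only [Complex.real_smul] using
            abs_add_mul_norm_sub_le_two_mul_norm_smul_sub_smul (norm_u.trans norm_v.symm) p q
  calc |p ^ 2 - q ^ 2| * nearestIntDist (a - b)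
      = |p - q| * ((p + q) * nearestIntDist (a - b)) := by
        rw [sq_sub_sq, abs_mul, abs_of_nonneg (add_nonneg hp hq)]; ring
    _ ≤ ‖p * u - q * v‖ * (‖p * u - q * v‖ / 2) :=
        mul_le_mul radial (by linarith) (mul_nonneg (add_nonneg hp hq) (nearestIntDist_nonneg _))
          (norm_nonneg _)
    _ = ‖p * u - q * v‖ ^ 2 / 2 := by ring

lemma natCast_sub_mul_nearestIntDist_le (α : ℝ) {m n : ℕ} (h : n ≤ m) :
    ((m - n : ℕ) : ℝ) * nearestIntDist ((m - n : ℕ) * α) ≤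
      ‖(sqrt m * exp (2 * π * I * (m * α)) - sqrt n * exp (2 * π * I * (n * α)) : ℂ)‖ ^ 2 / 2 := by
  have separation := abs_sq_sub_sq_mul_nearestIntDist_sub_le
    (Real.sqrt_nonneg m) (Real.sqrt_nonneg n) (m * α) (n * α)
  rw [Real.sq_sqrt m.cast_nonneg, Real.sq_sqrt n.cast_nonneg, ← sub_mul, ← Nat.cast_sub h,
    Nat.abs_cast] at separation
  simpa only [Complex.ofReal_mul, Complex.ofReal_natCast] using separation

end

theorem small_denominator_of_not_uniformly_discrete_general (α s : ℝ)
    (hnot : ¬ ∀ x : ℂ, Set.Subsingleton (fermatSpiral α ∩ Metric.ball x (s / 2))) :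
    ∃ k : ℕ, 1 ≤ k ∧ (k : ℝ) * nearestIntDist ((k : ℝ) * α) < s ^ 2 / 2 := by
  simp only [not_forall, Set.not_subsingleton_iff] at hnot
  obtain ⟨x, _, ⟨⟨m, rfl⟩, hm⟩, _, ⟨⟨n, rfl⟩, hn⟩, hne⟩ := hnot
  wlog hnm : n < m generalizing m n
  · exact this n hn m hne.symm hm (lt_of_le_of_ne (not_lt.1 hnm) fun h ↦ hne (by rw [h]))
  have close := (dist_triangle_right _ _ x).trans_lt (add_lt_add hm hn)
  rw [add_halves, dist_eq_norm] at close
  refine ⟨m - n, Nat.sub_pos_of_lt hnm, ?_⟩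
  refine (natCast_sub_mul_nearestIntDist_le α hnm.le).trans_lt ?_
  exact div_lt_div_of_pos_right (pow_lt_pow_left₀ close (norm_nonneg _) two_ne_zero) two_pos

/-- Let `α ∈ [0,1)` be irrational and `0 < s < 2`.  If `X(√t, α)`
is not `(s/2)`-uniformly discrete (some open ball of radius `s/2` contains two
distinct points of it), then there exists an integer `k ≥ 1` with `k·‖kα‖ < s²`. -/
theorem small_denominator_of_not_uniformly_discrete
    (α : ℝ) (hα : α ∈ Set.Ico (0 : ℝ) 1) (hirr : Irrational α)
    (s : ℝ) (hs0 : 0 < s) (hs2 : s < 2)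
    (hnot : ¬ ∀ x : ℂ, Set.Subsingleton (fermatSpiral α ∩ Metric.ball x (s / 2))) :
    ∃ k : ℕ, 1 ≤ k ∧ (k : ℝ) * nearestIntDist ((k : ℝ) * α) < s ^ 2 := by
  obtain ⟨k, hk, hlt⟩ := small_denominator_of_not_uniformly_discrete_general α s hnot
  exact ⟨k, hk, hlt.trans (half_lt_self (by positivity))⟩
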